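/- Let m > n be positive integers, φ_{n,m}: ℙⁿ → ℙᵐ be the embedding sending (a₀ : … : aₙ) to (a₀ : … : aₙ : 0 : … : 0), let P ∈ ℙⁿ with defining homogeneous prime ideal ℘ ⊂ K[X₀,…,Xₙ], let 𝔮 ⊂ K[X₀,…,Xₘ] be the defining homogeneous prime ideal of φ_{n,m}(P), and let r be a positive integer. Then ℘ʳ = 𝔮ʳ ∩ K[X₀,…,Xₙ], where K[X₀,…,Xₙ] is viewed as a subring of K[X₀,…,Xₘ]. -/

import Mathlib

open MvPolynomial

/-- The defining homogeneous prime ideal in `K[X₀,…,X_{N-1}]` of the point of projective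
space with homogeneous coordinate vector `a : Fin N → K`: it is generated by the linear
forms vanishing at `a`. -/
noncomputable def pointIdeal {K : Type} [Field K] {N : ℕ} (a : Fin N → K) :
    Ideal (MvPolynomial (Fin N) K) :=
  Ideal.span {l : MvPolynomial (Fin N) K |
    MvPolynomial.IsHomogeneous l 1 ∧ MvPolynomial.eval a l = 0}

/-- Homogeneous coordinates of the image of the point `a ∈ ℙⁿ` under the embedding
`φ_{n,m} : ℙⁿ → ℙᵐ`, `(a₀ : ⋯ : aₙ) ↦ (a₀ : ⋯ : aₙ : 0 : ⋯ : 0)`. -/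
def extendPoint {K : Type} [Field K] {n : ℕ} (m : ℕ) (a : Fin (n + 1) → K) :
    Fin (m + 1) → K :=
  fun i => if h : (i : ℕ) < n + 1 then a ⟨i, h⟩ else 0

/-- The substitution `X_{n+1} = ⋯ = X_m = 0`, as a `K`-algebra map
`K[X₀,…,X_m] → K[X₀,…,X_n]`. -/
noncomputable def setTailZero (K : Type) [Field K] (n m : ℕ) :
    MvPolynomial (Fin (m + 1)) K →ₐ[K] MvPolynomial (Fin (n + 1)) K :=
  MvPolynomial.aeval fun i : Fin (m + 1) =>
    if h : (i : ℕ) < n + 1 then MvPolynomial.X (⟨i, h⟩ : Fin (n + 1)) else 0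

/-- The inclusion `K[X₀,…,X_n] ⊆ K[X₀,…,X_m]` (as a ring map). -/
noncomputable def polyIncl (K : Type) [Field K] {n m : ℕ} (h : n ≤ m) :
    MvPolynomial (Fin (n + 1)) K →ₐ[K] MvPolynomial (Fin (m + 1)) K :=
  MvPolynomial.rename (Fin.castLE (Nat.succ_le_succ h))

/-- The degree-`t` homogeneous part `[I]_t` of an ideal, as a `K`-subspace. -/
noncomputable def degPart {K : Type} [Field K] {N : ℕ}
    (I : Ideal (MvPolynomial (Fin N) K)) (t : ℕ) :
    Submodule K (MvPolynomial (Fin N) K) :=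
  Submodule.restrictScalars K I ⊓ MvPolynomial.homogeneousSubmodule (Fin N) K t

/-- The Hilbert function `H_{R/I}(t) = dim_K (R/I)_t` of the quotient by a homogeneous
ideal `I`, computed as the dimension of the image of the degree-`t` part of `R` in `R/I`. -/
noncomputable def hilb {K : Type} [Field K] {N : ℕ}
    (I : Ideal (MvPolynomial (Fin N) K)) (t : ℕ) : ℕ :=
  Module.finrank K ((MvPolynomial.homogeneousSubmodule (Fin N) K t).map
    (Ideal.Quotient.mkₐ K I).toLinearMap)

/-- The regularity index of `R/I`: the least `t` from which the Hilbert function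
`H_{R/I}` is constant. -/
noncomputable def regIndex {K : Type} [Field K] {N : ℕ}
    (I : Ideal (MvPolynomial (Fin N) K)) : ℕ :=
  sInf {t : ℕ | ∀ t', t ≤ t' → hilb I t' = hilb I t}

theorem setTailZero_polyIncl (K : Type) [Field K] {n m : ℕ} (h : n ≤ m)
    (p : MvPolynomial (Fin (n + 1)) K) : setTailZero K n m (polyIncl K h p) = p := by
  unfold setTailZero polyIncl
  rw [aeval_rename]
  have : ((fun i : Fin (m + 1) =>
      if h : (i : ℕ) < n + 1 then (X (⟨i, h⟩ : Fin (n + 1)) : MvPolynomial (Fin (n + 1)) K)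
      else 0) ∘ Fin.castLE (Nat.succ_le_succ h)) = X := by
    funext i
    simp
    intro hi
    have := i.isLt
    omega
  rw [this, aeval_X_left_apply]

theorem eval_setTailZero (K : Type) [Field K] {n m : ℕ} (a : Fin (n + 1) → K)
    (p : MvPolynomial (Fin (m + 1)) K) :
    eval a (setTailZero K n m p) = eval (extendPoint m a) p := by
  induction p using MvPolynomial.induction_on with
  | C c => simp [setTailZero]
  | add p q hp hq => simp [hp, hq]
  | mul_X p i hp =>
    rw [map_mul, map_mul, map_mul, hp]
    congr 1
    simp only [setTailZero, extendPoint, aeval_X, eval_X]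
    split_ifs <;> simp

theorem eval_polyIncl (K : Type) [Field K] {n m : ℕ} (h : n ≤ m) (a : Fin (n + 1) → K)
    (p : MvPolynomial (Fin (n + 1)) K) :
    eval (extendPoint m a) (polyIncl K h p) = eval a p := by
  rw [← eval_setTailZero, setTailZero_polyIncl]

theorem stmt5 (K : Type) [Field K] [IsAlgClosed K] (n m : ℕ) (hnm : n < m)
    (a : Fin (n + 1) → K) (ha : a ≠ 0) (r : ℕ) (hr : 0 < r) :
    pointIdeal a ^ r =
      Ideal.comap (polyIncl K hnm.le) (pointIdeal (extendPoint m a) ^ r) := by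
  have h1 : Ideal.map (polyIncl K hnm.le) (pointIdeal a) ≤ pointIdeal (extendPoint m a) := by
    rw [pointIdeal, Ideal.map_span, Ideal.span_le]
    rintro _ ⟨l, ⟨hl, h0⟩, rfl⟩
    refine Ideal.subset_span ⟨?_, ?_⟩
    · exact hl.rename_isHomogeneous
    · exact (eval_polyIncl K hnm.le a l).trans h0
  have h2 : Ideal.map (setTailZero K n m) (pointIdeal (extendPoint m a)) ≤ pointIdeal a := by
    rw [pointIdeal, Ideal.map_span, Ideal.span_le]
    rintro _ ⟨l, ⟨hl, h0⟩, rfl⟩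
    refine Ideal.subset_span ⟨?_, ?_⟩
    · have := hl.aeval (n := 1) (fun i : Fin (m + 1) =>
        if h : (i : ℕ) < n + 1 then (X (⟨i, h⟩ : Fin (n + 1)) : MvPolynomial (Fin (n + 1)) K)
        else 0) (by
          intro i
          split_ifs
          · exact isHomogeneous_X _ _
          · exact isHomogeneous_zero _ _ _)
      exact this
    · exact (eval_setTailZero K a l).trans h0
  apply le_antisymm
  · rw [← Ideal.map_le_iff_le_comap, Ideal.map_pow]
    exact Ideal.pow_right_mono h1 r
  · intro p hp
    have h3 := Ideal.mem_map_of_mem (setTailZero K n m) (Ideal.mem_comap.1 hp)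
    rw [setTailZero_polyIncl, Ideal.map_pow] at h3
    exact Ideal.pow_right_mono h2 r h3
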